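/- Let Ω ⊂ ℝⁿ be a bounded domain and u ∈ L¹(Ω). For every ε > 0 and every γ > 0 there exists δ > 0 such that for every finite measurable partition 𝒫 = (P_j)_{j=1}^m of Ω into pairwise disjoint measurable sets of positive Lebesgue measure with ν(𝒫) = max_j diam(P_j) < δ, the piecewise-average function u_𝒫 satisfies |{x ∈ Ω : |u_𝒫(x) − u(x)| > ε}| < γ. In other words, u_𝒫 converges to u in Lebesgue measure as the norm of the partition tends to 0. -/

import Mathlib

open MeasureTheory Filter Topology
open scoped ENNReal NNReal

theorem piece_bound {n : ℕ} (S : Set (EuclideanSpace ℝ (Fin n))) (hS : MeasurableSet S)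
    (h0 : 0 < volume S) (hfin : volume S < ∞) (u g : EuclideanSpace ℝ (Fin n) → ℝ)
    (hu : IntegrableOn u S) (hg : IntegrableOn g S) (ε : ℝ)
    (hgε : ∀ x ∈ S, ∀ y ∈ S, |g y - g x| ≤ ε / 2) :
    ENNReal.ofReal (ε / 2) * volume {x ∈ S | ε < |(⨍ y in S, u y) - u x|} ≤
      2 * ∫⁻ x in S, ‖u x - g x‖ₑ := by
  have hh : IntegrableOn (fun x => u x - g x) S := hu.sub hg
  have hr : 0 < volume.real S := ENNReal.toReal_pos h0.ne' hfin.ne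
  set c : ℝ := ⨍ y in S, (u y - g y) with hc
  have hsub : (⨍ y in S, u y) = c + ⨍ y in S, g y := by
    rw [hc, setAverage_eq, setAverage_eq, setAverage_eq, integral_sub hu hg]
    simp only [smul_eq_mul]; ring
  have hgavg : ∀ x ∈ S, |(⨍ y in S, g y) - g x| ≤ ε / 2 := by
    intro x hx
    have h1 : (⨍ y in S, g y) - g x = (volume.real S)⁻¹ * ∫ y in S, (g y - g x) := by
      rw [setAverage_eq, integral_sub hg (integrableOn_const hfin.ne)]
      simp only [smul_eq_mul, setIntegral_const]
      field_simp
    have h2 : ‖∫ y in S, (g y - g x)‖ ≤ ε / 2 * volume.real S :=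
      norm_setIntegral_le_of_norm_le_const hfin (fun y hy => hgε x hx y hy)
    rw [h1, abs_mul, abs_of_pos (inv_pos.2 hr), inv_mul_le_iff₀ hr, mul_comm]
    exact h2
  have hcb : ‖c‖ₑ * volume S ≤ ∫⁻ x in S, ‖u x - g x‖ₑ := by
    refine le_trans (le_of_eq ?_) (enorm_integral_le_lintegral_enorm _)
    have : (∫ x in S, (u x - g x)) = c * volume.real S := by
      rw [hc, setAverage_eq, smul_eq_mul]; field_simp
    rw [this, enorm_mul]
    congr 1
    rw [Real.enorm_eq_ofReal hr.le, Measure.real, ENNReal.ofReal_toReal hfin.ne]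
  have hsubset : {x ∈ S | ε < |(⨍ y in S, u y) - u x|} ⊆
      {x | ENNReal.ofReal (ε / 2) ≤ ‖c - (u x - g x)‖ₑ} ∩ S := by
    rintro x ⟨hx, hlt⟩
    refine ⟨?_, hx⟩
    have h1 := hgavg x hx
    have h2 : (⨍ y in S, u y) - u x = (c - (u x - g x)) + ((⨍ y in S, g y) - g x) := by
      rw [hsub]; ring
    rw [h2] at hlt
    have h3 := abs_add_le (c - (u x - g x)) ((⨍ y in S, g y) - g x)
    rw [Set.mem_setOf_eq]
    rw [← ofReal_norm_eq_enorm, Real.norm_eq_abs]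
    exact ENNReal.ofReal_le_ofReal (by linarith)
  have hm : AEMeasurable (fun x => ‖c - (u x - g x)‖ₑ) (volume.restrict S) :=
    (aestronglyMeasurable_const.sub hh.aestronglyMeasurable).enorm
  calc _ ≤ ENNReal.ofReal (ε / 2) *
        (volume.restrict S) {x | ENNReal.ofReal (ε / 2) ≤ ‖c - (u x - g x)‖ₑ} := by
        rw [Measure.restrict_apply' hS]
        gcongr
    _ ≤ ∫⁻ x in S, ‖c - (u x - g x)‖ₑ := mul_meas_ge_le_lintegral₀ hm _
    _ ≤ ∫⁻ x in S, (‖c‖ₑ + ‖u x - g x‖ₑ) := lintegral_mono fun x => enorm_sub_le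
    _ = ‖c‖ₑ * volume S + ∫⁻ x in S, ‖u x - g x‖ₑ := by
        rw [lintegral_add_left measurable_const, setLIntegral_const]
    _ ≤ _ := by rw [two_mul]; gcongr

/-- Let `Ω ⊂ ℝⁿ` be a bounded domain and `u ∈ L¹(Ω)`. For every
`ε > 0` and `γ > 0` there is `δ > 0` such that for every finite measurable partition
`𝒫 = (P_j)_{j=1}^m` of `Ω` into pairwise disjoint measurable sets of positive measure
with `ν(𝒫) = max_j diam (P_j) < δ`, the piecewise-average function
`u_𝒫 = ∑ j, χ_{P_j} ⨍_{P_j} u` satisfies `|{x ∈ Ω : |u_𝒫(x) - u(x)| > ε}| < γ`. -/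
theorem measure_piecewiseAverage_dist_lt_of_partition_norm_small
    {n : ℕ} (Ω : Set (EuclideanSpace ℝ (Fin n)))
    (hΩopen : IsOpen Ω) (hΩconn : IsConnected Ω) (hΩbdd : Bornology.IsBounded Ω)
    (u : EuclideanSpace ℝ (Fin n) → ℝ) (hu : IntegrableOn u Ω)
    (ε γ : ℝ) (hε : 0 < ε) (hγ : 0 < γ) :
    ∃ δ > 0, ∀ (m : ℕ) (P : Fin m → Set (EuclideanSpace ℝ (Fin n))),
      (∀ j, MeasurableSet (P j)) →
      (∀ j, 0 < volume (P j)) →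
      Pairwise (Function.onFun Disjoint P) →
      (⋃ j, P j) = Ω →
      (∀ j, Metric.diam (P j) < δ) →
      volume {x ∈ Ω |
          ε < |(∑ j, (P j).indicator (fun _ => ⨍ y in P j, u y) x) - u x|} <
        ENNReal.ofReal γ := by
  have hfin : volume Ω < ∞ := hΩbdd.measure_lt_top
  set η : ℝ := ε * γ / 8 with hη
  have hηpos : 0 < η := by positivity
  obtain ⟨g, hgc, hgle, hgcont, hgint⟩ :=
    (hu.integrable_indicator hΩopen.measurableSet).exists_hasCompactSupport_lintegral_sub_le
      (ε := ENNReal.ofReal η) (ENNReal.ofReal_pos.2 hηpos).ne'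
  obtain ⟨δ, hδ, hδg⟩ := Metric.uniformContinuous_iff.1
    (hgcont.uniformContinuous_of_tendsto_cocompact hgc.is_zero_at_infty) (ε / 2) (by positivity)
  refine ⟨δ, hδ, fun m P hPm hP0 hPd hPU hPδ => ?_⟩
  have hsubΩ : ∀ j, P j ⊆ Ω := fun j => hPU ▸ Set.subset_iUnion P j
  have hpiece : ∀ j, ENNReal.ofReal (ε / 2) *
      volume {x ∈ P j | ε < |(⨍ y in P j, u y) - u x|} ≤ 2 * ∫⁻ x in P j, ‖u x - g x‖ₑ := by
    intro j
    refine piece_bound (P j) (hPm j) (hP0 j) ((measure_mono (hsubΩ j)).trans_lt hfin) u g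
      (hu.mono_set (hsubΩ j)) hgint.integrableOn ε ?_
    intro x hx y hy
    exact (hδg ((Metric.dist_le_diam_of_mem (hΩbdd.subset (hsubΩ j)) hy hx).trans_lt (hPδ j))).le
  have hL : ∫⁻ x in Ω, ‖u x - g x‖ₑ ≤ ENNReal.ofReal η := by
    refine le_trans ?_ hgle
    refine le_trans (le_of_eq ?_) (setLIntegral_le_lintegral Ω _)
    refine setLIntegral_congr_fun hΩopen.measurableSet fun x hx => ?_
    simp [Set.indicator_of_mem hx]
  have hbad : {x ∈ Ω | ε < |(∑ j, (P j).indicator (fun _ => ⨍ y in P j, u y) x) - u x|} ⊆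
      ⋃ j, {x ∈ P j | ε < |(⨍ y in P j, u y) - u x|} := by
    rintro x ⟨hx, hlt⟩
    rw [← hPU] at hx
    obtain ⟨j, hj⟩ := Set.mem_iUnion.1 hx
    refine Set.mem_iUnion.2 ⟨j, hj, ?_⟩
    rw [Finset.sum_eq_single j, Set.indicator_of_mem hj] at hlt
    · exact hlt
    · intro i _ hij
      exact Set.indicator_of_notMem (fun hi => Set.disjoint_left.1 (hPd hij) hi hj) _
    · simp
  have key : ENNReal.ofReal (ε / 2) *
      volume {x ∈ Ω | ε < |(∑ j, (P j).indicator (fun _ => ⨍ y in P j, u y) x) - u x|} ≤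
      ENNReal.ofReal (2 * η) := by
    calc _ ≤ ENNReal.ofReal (ε / 2) *
          ∑ j, volume {x ∈ P j | ε < |(⨍ y in P j, u y) - u x|} := by
          gcongr
          exact (measure_mono hbad).trans (measure_iUnion_fintype_le _ _)
      _ ≤ ∑ j, 2 * ∫⁻ x in P j, ‖u x - g x‖ₑ := by
          rw [Finset.mul_sum]; exact Finset.sum_le_sum fun j _ => hpiece j
      _ = 2 * ∫⁻ x in Ω, ‖u x - g x‖ₑ := by
          rw [← Finset.mul_sum, ← hPU, lintegral_iUnion hPm hPd, tsum_fintype]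
      _ ≤ 2 * ENNReal.ofReal η := by gcongr
      _ = _ := by rw [ENNReal.ofReal_mul (by norm_num)]; norm_num
  by_contra hcon
  have h1 : ENNReal.ofReal (ε / 2) * ENNReal.ofReal γ ≤ ENNReal.ofReal (2 * η) :=
    le_trans (by gcongr; exact not_lt.1 hcon) key
  rw [← ENNReal.ofReal_mul (by positivity), ENNReal.ofReal_le_ofReal_iff (by positivity), hη] at h1
  have := mul_pos hε hγ
  linarith
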